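/- Assume (Φ1), assume |f(x,t)| ≤ c₁|t|^{q(x)−1} for all x ∈ Ω, t ∈ ℝ with a constant c₁ > 0, and assume ∫_Ω |u(x)|^{q(x)} dx < ∞ for every u ∈ X. Then for every λ > 0 and all u, v ∈ X, the limit lim_{t→0} (J_λ(u + t·v) − J_λ(u))/t exists and equals (1/2)∬_Q a(x,y,|D^s u|)·D^s u·D^s v·dx dy/|x − y|^N + ∫_Ω â_x(|u|)·u·v dx + ∫_{CΩ} β(x)·â_x(|u|)·u·v dx − λ∫_Ω f(x,u(x))·v(x) dx. -/

import Mathlib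

open MeasureTheory Set Filter
open scoped ENNReal

noncomputable section

abbrev Eucl (N : ℕ) := EuclideanSpace ℝ (Fin N)

variable {N : ℕ}

/-- `Q = ℝ^{2N} \ (CΩ)^2`. -/
def Qset (Ω : Set (Eucl N)) : Set (Eucl N × Eucl N) := (Ωᶜ ×ˢ Ωᶜ)ᶜ

/-- `φ_{x,y}(t) = a(x,y,|t|) t` for `t ≠ 0`, `φ_{x,y}(0) = 0`. -/
def phiF (a : Eucl N → Eucl N → ℝ → ℝ) (x y : Eucl N) (t : ℝ) : ℝ :=
  if t = 0 then 0 else a x y |t| * t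

/-- `Φ_{x,y}(t) = ∫₀ᵗ φ_{x,y}(τ) dτ`. -/
def PhiF (a : Eucl N → Eucl N → ℝ → ℝ) (x y : Eucl N) (t : ℝ) : ℝ :=
  ∫ τ in (0:ℝ)..t, phiF a x y τ

/-- Gagliardo-type modular on `Q` at scale `lam`. -/
def modQ (a : Eucl N → Eucl N → ℝ → ℝ) (s : ℝ) (Ω : Set (Eucl N))
    (u : Eucl N → ℝ) (lam : ℝ) : ℝ≥0∞ :=
  ∫⁻ p in Qset Ω, ENNReal.ofReal
    (PhiF a p.1 p.2 (|u p.1 - u p.2| / (lam * dist p.1 p.2 ^ s)) / dist p.1 p.2 ^ (N : ℝ))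

/-- Gagliardo-type modular on `Ω × Ω` at scale `lam`. -/
def modOO (a : Eucl N → Eucl N → ℝ → ℝ) (s : ℝ) (Ω : Set (Eucl N))
    (u : Eucl N → ℝ) (lam : ℝ) : ℝ≥0∞ :=
  ∫⁻ p in Ω ×ˢ Ω, ENNReal.ofReal
    (PhiF a p.1 p.2 (|u p.1 - u p.2| / (lam * dist p.1 p.2 ^ s)) / dist p.1 p.2 ^ (N : ℝ))

/-- modular `∫_Ω Φ̂_x(|u|/λ)`. -/
def modO (a : Eucl N → Eucl N → ℝ → ℝ) (Ω : Set (Eucl N))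
    (u : Eucl N → ℝ) (lam : ℝ) : ℝ≥0∞ :=
  ∫⁻ x in Ω, ENNReal.ofReal (PhiF a x x (|u x| / lam))

/-- modular `∫_{CΩ} β Φ̂_x(|u|/λ)`. -/
def modB (a : Eucl N → Eucl N → ℝ → ℝ) (Ω : Set (Eucl N)) (β : Eucl N → ℝ)
    (u : Eucl N → ℝ) (lam : ℝ) : ℝ≥0∞ :=
  ∫⁻ x in Ωᶜ, ENNReal.ofReal (β x * PhiF a x x (|u x| / lam))

/-- Luxemburg infimum of a modular family (`∞` if no admissible `λ`). -/
def lux (m : ℝ → ℝ≥0∞) : ℝ≥0∞ :=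
  sInf {l : ℝ≥0∞ | ∃ lam : ℝ, 0 < lam ∧ l = ENNReal.ofReal lam ∧ m lam ≤ 1}

/-- `‖u‖_X = [u]_{s,Φ,Q} + ‖u‖_{Φ̂} + ‖u‖_{Φ̂,β,CΩ}`. -/
def normX (a : Eucl N → Eucl N → ℝ → ℝ) (s : ℝ) (Ω : Set (Eucl N)) (β : Eucl N → ℝ)
    (u : Eucl N → ℝ) : ℝ≥0∞ :=
  lux (modQ a s Ω u) + lux (modO a Ω u) + lux (modB a Ω β u)

/-- the modular `ρ_s`. -/
def rhoS (a : Eucl N → Eucl N → ℝ → ℝ) (s : ℝ) (Ω : Set (Eucl N)) (β : Eucl N → ℝ)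
    (u : Eucl N → ℝ) : ℝ≥0∞ :=
  modQ a s Ω u 1 + modO a Ω u 1 + modB a Ω β u 1

/-- the modular norm `‖u‖ = inf {λ > 0 : ρ_s(u/λ) ≤ 1}`. -/
def normM (a : Eucl N → Eucl N → ℝ → ℝ) (s : ℝ) (Ω : Set (Eucl N)) (β : Eucl N → ℝ)
    (u : Eucl N → ℝ) : ℝ≥0∞ :=
  sInf {l : ℝ≥0∞ | ∃ lam : ℝ, 0 < lam ∧ l = ENNReal.ofReal lam ∧
    rhoS a s Ω β (fun x => u x / lam) ≤ 1}

/-- `X` described via the norm `‖·‖_X`. -/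
def XsetX (a : Eucl N → Eucl N → ℝ → ℝ) (s : ℝ) (Ω : Set (Eucl N)) (β : Eucl N → ℝ) :
    Set (Eucl N → ℝ) :=
  {u | Measurable u ∧ normX a s Ω β u < ⊤}

/-- `X` described via the modular norm `‖·‖`. -/
def XsetM (a : Eucl N → Eucl N → ℝ → ℝ) (s : ℝ) (Ω : Set (Eucl N)) (β : Eucl N → ℝ) :
    Set (Eucl N → ℝ) :=
  {u | Measurable u ∧ (∃ lam : ℝ, 0 < lam ∧ rhoS a s Ω β (fun x => u x / lam) < ⊤) ∧
    normM a s Ω β u < ⊤}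

/-- the fractional difference quotient `D^s u`. -/
def Du (s : ℝ) (u : Eucl N → ℝ) (p : Eucl N × Eucl N) : ℝ :=
  (u p.1 - u p.2) / dist p.1 p.2 ^ s

/-- `a(x,y,|D^s u|) D^s u`, with the convention that it vanishes when `u x = u y`. -/
def Ku (a : Eucl N → Eucl N → ℝ → ℝ) (s : ℝ) (u : Eucl N → ℝ) (p : Eucl N × Eucl N) : ℝ :=
  if u p.1 = u p.2 then 0 else a p.1 p.2 |Du s u p| * Du s u p

/-- the form `A_s(u,v)`. -/
def Aform (a : Eucl N → Eucl N → ℝ → ℝ) (s : ℝ) (Ω : Set (Eucl N)) (β : Eucl N → ℝ)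
    (u v : Eucl N → ℝ) : ℝ :=
  (1/2) * (∫ p in Qset Ω, Ku a s u p * Du s v p / dist p.1 p.2 ^ (N : ℝ))
  + (∫ x in Ω, a x x |u x| * u x * v x)
  + ∫ x in Ωᶜ, β x * (a x x |u x| * u x * v x)

/-- the nonlocal normal derivative `𝒩^s_a u` on `CΩ`. -/
def Nop (a : Eucl N → Eucl N → ℝ → ℝ) (s : ℝ) (Ω : Set (Eucl N)) (u : Eucl N → ℝ)
    (x : Eucl N) : ℝ :=
  ∫ y in Ω, Ku a s u (x, y) / dist x y ^ ((N : ℝ) + s)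

/-- `F(x,t) = ∫₀ᵗ f(x,τ) dτ`. -/
def Ff (f : Eucl N → ℝ → ℝ) (x : Eucl N) (t : ℝ) : ℝ := ∫ τ in (0:ℝ)..t, f x τ

/-- the energy functional `J_λ`. -/
def Jlam (a : Eucl N → Eucl N → ℝ → ℝ) (s : ℝ) (Ω : Set (Eucl N)) (β : Eucl N → ℝ)
    (f : Eucl N → ℝ → ℝ) (lam : ℝ) (u : Eucl N → ℝ) : ℝ :=
  (1/2) * (modQ a s Ω u 1).toReal + (modO a Ω u 1).toReal + (modB a Ω β u 1).toReal
    - lam * ∫ x in Ω, Ff f x (u x)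

/-- the variable-exponent Luxemburg norm `‖u‖_{q(·)}` on `Ω`. -/
def normq (Ω : Set (Eucl N)) (q : Eucl N → ℝ) (u : Eucl N → ℝ) : ℝ≥0∞ :=
  sInf {l : ℝ≥0∞ | ∃ lam : ℝ, 0 < lam ∧ l = ENNReal.ofReal lam ∧
    (∫⁻ x in Ω, ENNReal.ofReal (|u x / lam| ^ q x)) ≤ 1}

/-!
For each pair `(x, y)` the function `Φ` is even and convex, and the upper bound in (Φ1) integrates
to `Φ (k * t) ≤ k ^ φ⁺ * Φ t` for `1 ≤ k`. Hence `X` consists of the functions whose three modulars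
are finite, and it contains `|u| + |v|` along with `u` and `v`. For `|t| ≤ 1` the `t`-derivatives of
the integrands of `J_λ (u + t • v)` are dominated by multiples of `φ M * M ≤ φ⁺ * Φ M`, with
`M = |D^s u| + |D^s v|` or `M = |u| + |v|`, and of `(|u| + |v|) ^ q`. These are integrable because
`|u| + |v|` belongs to `X`, so one may differentiate under the integral sign.
-/

/-- The primitive of `φ` vanishing at `0`, common to `Φ` (from `φ`) and `F` (from `f`). -/
def primitive (φ : ℝ → ℝ) (t : ℝ) : ℝ := ∫ τ in (0 : ℝ)..t, φ τ

section Primitive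

variable {φ : ℝ → ℝ}

theorem primitive_zero : primitive φ 0 = 0 :=
  intervalIntegral.integral_same

theorem primitive_const_mul (c : ℝ) (φ : ℝ → ℝ) (t : ℝ) :
    primitive (fun τ => c * φ τ) t = c * primitive φ t :=
  intervalIntegral.integral_const_mul c φ

theorem primitive_eq_integral_unitInterval (φ : ℝ → ℝ) (t : ℝ) :
    primitive φ t = ∫ τ in (0 : ℝ)..1, t * φ (t * τ) := by
  simp [primitive]

theorem abs_primitive_le_of_abs_mul_le {t b : ℝ} (hb : ∀ τ, |τ| ≤ |t| → |φ τ| * |t| ≤ b) :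
    |primitive φ t| ≤ b := by
  rw [primitive_eq_integral_unitInterval, ← Real.norm_eq_abs]
  refine (intervalIntegral.norm_integral_le_of_norm_le_const (C := b) fun τ hτ => ?_).trans
    (by simp)
  rw [uIoc_of_le zero_le_one] at hτ
  rw [Real.norm_eq_abs, abs_mul, mul_comm]
  refine hb _ ?_
  rw [abs_mul, abs_of_pos hτ.1]
  exact mul_le_of_le_one_right (abs_nonneg t) hτ.2

theorem hasDerivAt_primitive (hφ : Continuous φ) (t : ℝ) : HasDerivAt (primitive φ) (φ t) t :=
  (hφ.integral_hasStrictDerivAt 0 t).hasDerivAt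

theorem deriv_primitive (hφ : Continuous φ) : deriv (primitive φ) = φ :=
  funext fun t => (hasDerivAt_primitive hφ t).deriv

theorem primitive_neg (hφ : φ.Odd) (t : ℝ) : primitive φ (-t) = primitive φ t := by
  simp only [primitive_eq_integral_unitInterval φ, neg_mul, hφ.eq, mul_neg, neg_neg]

theorem primitive_abs (hφ : φ.Odd) (t : ℝ) : primitive φ |t| = primitive φ t := by
  rcases abs_choice t with h | h <;> simp only [h, primitive_neg hφ]

theorem convexOn_primitive (hφ : Monotone φ) (hc : Continuous φ) :
    ConvexOn ℝ univ (primitive φ) :=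
  Monotone.convexOn_univ_of_deriv (fun t => (hasDerivAt_primitive hc t).differentiableAt)
    ((deriv_primitive hc).symm ▸ hφ)

theorem measurable_primitive {α : Type*} [MeasurableSpace α] {g : α → ℝ → ℝ}
    (hg : Measurable (Function.uncurry g)) {U : α → ℝ} (hU : Measurable U) :
    Measurable fun x => primitive (g x) (U x) := by
  simp only [primitive_eq_integral_unitInterval, intervalIntegral.integral_of_le zero_le_one]
  have hUτ : Measurable fun p : α × ℝ => U p.1 * p.2 :=
    (hU.comp measurable_fst).mul measurable_snd
  have hint : Measurable fun p : α × ℝ => U p.1 * g p.1 (U p.1 * p.2) :=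
    (hU.comp measurable_fst).mul (hg.comp (measurable_fst.prodMk hUτ))
  exact (hint.stronglyMeasurable.integral_prod_right (ν := volume.restrict (Ioc 0 1))).measurable

end Primitive

section DerivativeUnderIntegral

variable {α : Type*} [MeasurableSpace α] {μ : Measure α} {g : α → ℝ → ℝ} {U V B : α → ℝ}

theorem abs_add_mul_le_add_abs {u v t : ℝ} (ht : |t| ≤ 1) : |u + t * v| ≤ |u| + |v| :=
  calc |u + t * v| ≤ |u| + |t| * |v| := by simpa only [abs_mul] using abs_add_le u (t * v)
    _ ≤ |u| + |v| := by gcongr; exact mul_le_of_le_one_left (abs_nonneg v) ht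

theorem hasDerivAt_integral_primitive_add_mul (hg : Measurable (Function.uncurry g))
    (hgc : ∀ᵐ x ∂μ, Continuous (g x)) (hU : Measurable U) (hV : Measurable V)
    (hB : Integrable B μ)
    (hb : ∀ᵐ x ∂μ, ∀ τ, |τ| ≤ |U x| + |V x| → |g x τ| * (|U x| + |V x|) ≤ B x) :
    HasDerivAt (fun t : ℝ => ∫ x, primitive (g x) (U x + t * V x) ∂μ)
      (∫ x, g x (U x) * V x ∂μ) 0 := by
  have hmeas : ∀ t : ℝ, AEStronglyMeasurable (fun x => primitive (g x) (U x + t * V x)) μ :=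
    fun t => (measurable_primitive hg (hU.add (hV.const_mul t))).aestronglyMeasurable
  have hint : Integrable (fun x => primitive (g x) (U x + 0 * V x)) μ := by
    refine hB.mono' (hmeas 0) ?_
    filter_upwards [hb] with x hx
    have hUx : |U x| ≤ |U x| + |V x| := le_add_of_nonneg_right (abs_nonneg _)
    rw [zero_mul, add_zero]
    exact abs_primitive_le_of_abs_mul_le fun τ hτ =>
      (mul_le_mul_of_nonneg_left hUx (abs_nonneg _)).trans (hx τ (hτ.trans hUx))
  have hmeas' : AEStronglyMeasurable (fun x => g x (U x + 0 * V x) * V x) μ :=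
    ((hg.comp (measurable_id.prodMk (hU.add (hV.const_mul 0)))).mul hV).aestronglyMeasurable
  have hbound : ∀ᵐ x ∂μ, ∀ t ∈ Metric.ball (0 : ℝ) 1, ‖g x (U x + t * V x) * V x‖ ≤ B x := by
    filter_upwards [hb] with x hx t ht
    have ht' : |t| ≤ 1 := (mem_ball_zero_iff.1 ht).le
    rw [norm_mul, Real.norm_eq_abs, Real.norm_eq_abs]
    exact (mul_le_mul_of_nonneg_left (le_add_of_nonneg_left (abs_nonneg _)) (abs_nonneg _)).trans
      (hx _ (abs_add_mul_le_add_abs ht'))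
  have hderiv : ∀ᵐ x ∂μ, ∀ t ∈ Metric.ball (0 : ℝ) 1,
      HasDerivAt (fun t => primitive (g x) (U x + t * V x)) (g x (U x + t * V x) * V x) t := by
    filter_upwards [hgc] with x hx t _
    have hline : HasDerivAt (fun t => U x + t * V x) (V x) t := by
      simpa using ((hasDerivAt_id t).mul_const (V x)).const_add (U x)
    exact (hasDerivAt_primitive hx _).comp t hline
  simpa only [zero_mul, add_zero] using
    (hasDerivAt_integral_of_dominated_loc_of_deriv_le (Metric.ball_mem_nhds 0 one_pos)
      (.of_forall hmeas) hint hmeas' hbound hB hderiv).2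

end DerivativeUnderIntegral

/-- Densities `φ` of even convex functions `Φ = primitive φ` satisfying the growth condition
`t * φ t ≤ K * Φ t`, which is the upper bound in (Φ1) written without division. -/
structure IsYoungDensity (K : ℝ) (φ : ℝ → ℝ) : Prop where
  odd : φ.Odd
  monotone : Monotone φ
  continuous : Continuous φ
  mul_le : ∀ t, 0 ≤ t → t * φ t ≤ K * primitive φ t

namespace IsYoungDensity

variable {K : ℝ} {φ : ℝ → ℝ}

theorem of_div_le (hodd : φ.Odd) (hmono : StrictMono φ) (hcont : Continuous φ)
    (h : ∀ t, 0 < t → t * φ t / primitive φ t ≤ K) : IsYoungDensity K φ := by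
  refine ⟨hodd, hmono.monotone, hcont, fun t ht => ?_⟩
  rcases ht.eq_or_lt with rfl | ht
  · simp [primitive_zero]
  have hpos : 0 < primitive φ t :=
    intervalIntegral.intervalIntegral_pos_of_pos_on (hcont.intervalIntegrable 0 t)
      (fun τ hτ => hodd.map_zero ▸ hmono hτ.1) ht
  exact (div_le_iff₀ hpos).1 (h t ht)

theorem const_mul (hφ : IsYoungDensity K φ) {c : ℝ} (hc : 0 ≤ c) :
    IsYoungDensity K fun t => c * φ t where
  odd t := by simp only [hφ.odd.eq t, mul_neg]
  monotone := hφ.monotone.const_mul hc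
  continuous := hφ.continuous.const_mul c
  mul_le t ht := by
    rw [primitive_const_mul, mul_left_comm, mul_left_comm K]
    exact mul_le_mul_of_nonneg_left (hφ.mul_le t ht) hc

theorem convexOn_primitive (hφ : IsYoungDensity K φ) : ConvexOn ℝ univ (primitive φ) :=
  _root_.convexOn_primitive hφ.monotone hφ.continuous

theorem primitive_div_le (hφ : IsYoungDensity K φ) {k : ℝ} (hk : 1 ≤ k) (t : ℝ) :
    primitive φ (t / k) ≤ primitive φ t / k := by
  have hconv := hφ.convexOn_primitive.2 (mem_univ t) (mem_univ 0)
    (inv_nonneg.2 (zero_le_one.trans hk)) (sub_nonneg.2 (inv_le_one_of_one_le₀ hk))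
    (add_sub_cancel _ _)
  simpa only [smul_eq_mul, mul_zero, add_zero, primitive_zero, ← div_eq_inv_mul] using hconv

theorem monotoneOn_primitive (hφ : IsYoungDensity K φ) : MonotoneOn (primitive φ) (Ici 0) := by
  have hdiff := fun t => (hasDerivAt_primitive hφ.continuous t).differentiableAt
  refine monotoneOn_of_deriv_nonneg (convex_Ici 0)
    (fun t _ => (hdiff t).continuousAt.continuousWithinAt)
    (fun t _ => (hdiff t).differentiableWithinAt) fun t ht => ?_
  rw [deriv_primitive hφ.continuous, ← hφ.odd.map_zero]
  exact hφ.monotone (interior_subset ht)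

theorem primitive_le_primitive (hφ : IsYoungDensity K φ) {s t : ℝ} (hst : |s| ≤ |t|) :
    primitive φ s ≤ primitive φ t := by
  rw [← primitive_abs hφ.odd s, ← primitive_abs hφ.odd t]
  exact hφ.monotoneOn_primitive (abs_nonneg s) (abs_nonneg t) hst

theorem primitive_nonneg (hφ : IsYoungDensity K φ) (t : ℝ) : 0 ≤ primitive φ t := by
  simpa only [primitive_zero] using
    hφ.primitive_le_primitive (s := 0) (t := t) (by simp)

theorem antitoneOn_primitive_mul_rpow_neg (hφ : IsYoungDensity K φ) :
    AntitoneOn (fun r => primitive φ r * r ^ (-K)) (Ioi 0) := by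
  have hderiv : ∀ r ∈ Ioi (0 : ℝ), HasDerivAt (fun r => primitive φ r * r ^ (-K))
      (φ r * r ^ (-K) + primitive φ r * (-K * r ^ (-K - 1))) r := fun r hr =>
    (hasDerivAt_primitive hφ.continuous r).mul (Real.hasDerivAt_rpow_const (.inl hr.ne'))
  refine antitoneOn_of_deriv_nonpos (convex_Ioi 0)
    (fun r hr => (hderiv r hr).continuousAt.continuousWithinAt) ?_ ?_ <;> rw [interior_Ioi]
  · exact fun r hr => (hderiv r hr).differentiableAt.differentiableWithinAt
  · intro r hr
    have hpow : r ^ (-K) = r ^ (-K - 1) * r := by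
      rw [← Real.rpow_add_one hr.ne', sub_add_cancel]
    calc deriv (fun r => primitive φ r * r ^ (-K)) r
        = r ^ (-K - 1) * (r * φ r - K * primitive φ r) := by
          rw [(hderiv r hr).deriv, hpow]; ring
      _ ≤ 0 := mul_nonpos_of_nonneg_of_nonpos (Real.rpow_nonneg (le_of_lt hr) _)
          (sub_nonpos.2 (hφ.mul_le r (le_of_lt hr)))

theorem primitive_mul_le (hφ : IsYoungDensity K φ) {k : ℝ} (hk : 1 ≤ k) (t : ℝ) :
    primitive φ (k * t) ≤ k ^ K * primitive φ t := by
  have hk0 : 0 < k := zero_lt_one.trans_le hk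
  rw [← primitive_abs hφ.odd (k * t), ← primitive_abs hφ.odd t, abs_mul, abs_of_pos hk0]
  rcases (abs_nonneg t).eq_or_lt with ht | ht
  · simp [← ht, primitive_zero]
  have hanti := hφ.antitoneOn_primitive_mul_rpow_neg (mem_Ioi.2 ht) (mem_Ioi.2 (mul_pos hk0 ht))
    (le_mul_of_one_le_left ht.le hk)
  simp only [Real.rpow_neg ht.le, Real.rpow_neg (mul_pos hk0 ht).le, ← div_eq_mul_inv] at hanti
  rwa [div_le_div_iff₀ (Real.rpow_pos_of_pos (mul_pos hk0 ht) _) (Real.rpow_pos_of_pos ht _),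
    Real.mul_rpow hk0.le ht.le, ← mul_assoc,
    mul_le_mul_iff_left₀ (Real.rpow_pos_of_pos ht _), mul_comm (primitive φ |t|)] at hanti

theorem primitive_add_le (hφ : IsYoungDensity K φ) (s t : ℝ) :
    primitive φ (s + t) ≤ 2 ^ K * (primitive φ s + primitive φ t) := by
  have hmid := hφ.convexOn_primitive.2 (mem_univ s) (mem_univ t)
    one_half_pos.le one_half_pos.le (add_halves 1)
  simp only [smul_eq_mul, ← mul_add] at hmid
  calc primitive φ (s + t) = primitive φ (2 * (1 / 2 * (s + t))) := by ring_nf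
    _ ≤ 2 ^ K * primitive φ (1 / 2 * (s + t)) := hφ.primitive_mul_le one_le_two _
    _ ≤ 2 ^ K * (primitive φ s + primitive φ t) := by
      gcongr
      linarith [hφ.primitive_nonneg s, hφ.primitive_nonneg t]

theorem abs_mul_le (hφ : IsYoungDensity K φ) {τ M : ℝ} (hτ : |τ| ≤ M) :
    |φ τ| * M ≤ K * primitive φ M := by
  have hM : 0 ≤ M := (abs_nonneg τ).trans hτ
  have habs : |φ τ| ≤ φ M := by
    rw [abs_le, ← hφ.odd]
    exact ⟨hφ.monotone (abs_le.1 hτ).1, hφ.monotone (abs_le.1 hτ).2⟩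
  calc |φ τ| * M ≤ φ M * M := mul_le_mul_of_nonneg_right habs hM
    _ ≤ K * primitive φ M := mul_comm M (φ M) ▸ hφ.mul_le M hM

end IsYoungDensity

/-- The modular `∫ Φ_x (U x) dμ` of the family `Φ_x = primitive (g x)`. The three modulars of the
space `X` are of this form, with their weights absorbed into `g`. -/
def modular {α : Type*} [MeasurableSpace α] (μ : Measure α) (g : α → ℝ → ℝ) (U : α → ℝ) : ℝ≥0∞ :=
  ∫⁻ x, ENNReal.ofReal (primitive (g x) (U x)) ∂μ

section Modular

variable {α : Type*} [MeasurableSpace α] {μ : Measure α} {g : α → ℝ → ℝ} {K : ℝ} {U V : α → ℝ}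

theorem modular_mono (hφ : ∀ᵐ x ∂μ, IsYoungDensity K (g x)) (hUV : ∀ x, |U x| ≤ |V x|) :
    modular μ g U ≤ modular μ g V := by
  refine lintegral_mono_ae ?_
  filter_upwards [hφ] with x hx
  exact ENNReal.ofReal_le_ofReal (hx.primitive_le_primitive (hUV x))

theorem modular_div_le (hφ : ∀ᵐ x ∂μ, IsYoungDensity K (g x)) {k : ℝ} (hk : 1 ≤ k) :
    modular μ g (fun x => U x / k) ≤ modular μ g U / ENNReal.ofReal k := by
  have hk0 : 0 < k := zero_lt_one.trans_le hk
  rw [modular, modular, div_eq_mul_inv, mul_comm,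
    ← lintegral_const_mul' _ _ (ENNReal.inv_ne_top.2 (ENNReal.ofReal_pos.2 hk0).ne')]
  refine lintegral_mono_ae ?_
  filter_upwards [hφ] with x hx
  rw [mul_comm, ← div_eq_mul_inv, ← ENNReal.ofReal_div_of_pos hk0]
  exact ENNReal.ofReal_le_ofReal (hx.primitive_div_le hk _)

theorem modular_const_mul_le (hφ : ∀ᵐ x ∂μ, IsYoungDensity K (g x)) {k : ℝ} (hk : 1 ≤ k) :
    modular μ g (fun x => k * U x) ≤ ENNReal.ofReal (k ^ K) * modular μ g U := by
  rw [modular, modular, ← lintegral_const_mul' _ _ ENNReal.ofReal_ne_top]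
  refine lintegral_mono_ae ?_
  filter_upwards [hφ] with x hx
  rw [← ENNReal.ofReal_mul (Real.rpow_nonneg (zero_le_one.trans hk) K)]
  exact ENNReal.ofReal_le_ofReal (hx.primitive_mul_le hk _)

theorem modular_add_le (hφ : ∀ᵐ x ∂μ, IsYoungDensity K (g x))
    (hg : Measurable (Function.uncurry g)) (hU : Measurable U) :
    modular μ g (fun x => U x + V x) ≤
      ENNReal.ofReal (2 ^ K) * (modular μ g U + modular μ g V) := by
  rw [modular, modular, modular, ← lintegral_add_left (measurable_primitive hg hU).ennreal_ofReal,
    ← lintegral_const_mul' _ _ ENNReal.ofReal_ne_top]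
  refine lintegral_mono_ae ?_
  filter_upwards [hφ] with x hx
  rw [← ENNReal.ofReal_add (hx.primitive_nonneg _) (hx.primitive_nonneg _),
    ← ENNReal.ofReal_mul (Real.rpow_nonneg zero_le_two K)]
  exact ENNReal.ofReal_le_ofReal (hx.primitive_add_le _ _)

theorem modular_abs_add_abs_lt_top (hφ : ∀ᵐ x ∂μ, IsYoungDensity K (g x))
    (hg : Measurable (Function.uncurry g)) (hU : Measurable U)
    (hUfin : modular μ g U < ⊤) (hVfin : modular μ g V < ⊤) :
    modular μ g (fun x => |U x| + |V x|) < ⊤ := by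
  have habs : ∀ W : α → ℝ, modular μ g (fun x => |W x|) ≤ modular μ g W :=
    fun W => modular_mono hφ fun x => (abs_abs (W x)).le
  exact (modular_add_le hφ hg hU.abs).trans_lt <| ENNReal.mul_lt_top ENNReal.ofReal_lt_top <|
    ENNReal.add_lt_top.2 ⟨(habs U).trans_lt hUfin, (habs V).trans_lt hVfin⟩

theorem lux_lt_top_iff {m : ℝ → ℝ≥0∞} : lux m < ⊤ ↔ ∃ l : ℝ, 0 < l ∧ m l ≤ 1 := by
  rw [lux, sInf_lt_iff]
  constructor
  · rintro ⟨_, ⟨l, hl, _, hm⟩, _⟩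
    exact ⟨l, hl, hm⟩
  · rintro ⟨l, hl, hm⟩
    exact ⟨_, ⟨l, hl, rfl, hm⟩, ENNReal.ofReal_lt_top⟩

theorem lux_modular_lt_top_iff (hφ : ∀ᵐ x ∂μ, IsYoungDensity K (g x)) :
    lux (fun l => modular μ g fun x => U x / l) < ⊤ ↔ modular μ g U < ⊤ := by
  rw [lux_lt_top_iff]
  constructor
  · rintro ⟨l, hl, hm⟩
    have hUl : ∀ x, |U x| ≤ |max 1 l * (U x / l)| := fun x => by
      rw [abs_mul, abs_div, abs_of_pos hl, abs_of_pos (lt_max_of_lt_left one_pos),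
        ← mul_div_assoc, le_div_iff₀ hl, mul_comm]
      exact mul_le_mul_of_nonneg_right (le_max_right 1 l) (abs_nonneg _)
    calc modular μ g U ≤ modular μ g fun x => max 1 l * (U x / l) := modular_mono hφ hUl
      _ ≤ ENNReal.ofReal (max 1 l ^ K) * modular μ g fun x => U x / l :=
        modular_const_mul_le hφ (le_max_left 1 l)
      _ < ⊤ := ENNReal.mul_lt_top ENNReal.ofReal_lt_top (hm.trans_lt ENNReal.one_lt_top)
  · intro hU
    have hk : 1 ≤ max 1 (modular μ g U).toReal := le_max_left _ _
    refine ⟨_, zero_lt_one.trans_le hk, (modular_div_le hφ hk).trans (ENNReal.div_le_of_le_mul ?_)⟩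
    rw [one_mul, ENNReal.le_ofReal_iff_toReal_le hU.ne (zero_le_one.trans hk)]
    exact le_max_right _ _

theorem toReal_modular (hφ : ∀ᵐ x ∂μ, IsYoungDensity K (g x))
    (hg : Measurable (Function.uncurry g)) (hU : Measurable U) :
    (modular μ g U).toReal = ∫ x, primitive (g x) (U x) ∂μ :=
  (integral_eq_lintegral_of_nonneg_ae (hφ.mono fun _ hx => hx.primitive_nonneg _)
    (measurable_primitive hg hU).aestronglyMeasurable).symm

theorem integrable_primitive_of_modular_lt_top (hφ : ∀ᵐ x ∂μ, IsYoungDensity K (g x))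
    (hg : Measurable (Function.uncurry g)) (hU : Measurable U) (hfin : modular μ g U < ⊤) :
    Integrable (fun x => primitive (g x) (U x)) μ :=
  ⟨(measurable_primitive hg hU).aestronglyMeasurable,
    (hasFiniteIntegral_iff_ofReal (hφ.mono fun _ hx => hx.primitive_nonneg _)).2 hfin⟩

theorem hasDerivAt_modular_add_mul (hφ : ∀ᵐ x ∂μ, IsYoungDensity K (g x))
    (hg : Measurable (Function.uncurry g)) (hU : Measurable U) (hV : Measurable V)
    (hUfin : modular μ g U < ⊤) (hVfin : modular μ g V < ⊤) :
    HasDerivAt (fun t : ℝ => (modular μ g fun x => U x + t * V x).toReal)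
      (∫ x, g x (U x) * V x ∂μ) 0 := by
  have hbound : Integrable (fun x => K * primitive (g x) (|U x| + |V x|)) μ :=
    (integrable_primitive_of_modular_lt_top hφ hg (hU.abs.add hV.abs)
      (modular_abs_add_abs_lt_top hφ hg hU hUfin hVfin)).const_mul K
  have hreal : (fun t : ℝ => (modular μ g fun x => U x + t * V x).toReal) =
      fun t : ℝ => ∫ x, primitive (g x) (U x + t * V x) ∂μ :=
    funext fun t => toReal_modular hφ hg (hU.add (hV.const_mul t))
  rw [hreal]
  exact hasDerivAt_integral_primitive_add_mul hg (hφ.mono fun _ hx => hx.continuous) hU hV hbound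
    (hφ.mono fun _ hx _ hτ => hx.abs_mul_le hτ)

end Modular

section Space

variable {a : Eucl N → Eucl N → ℝ → ℝ} {s : ℝ} {Ω : Set (Eucl N)} {β : Eucl N → ℝ} {K : ℝ}
  {u v : Eucl N → ℝ}

/-- The density of the Gagliardo modular `modQ`: the singular weight `|x - y|^(-N)` is put into
`φ_{x,y}`, so that `modQ` is a modular with respect to Lebesgue measure on `Q`. -/
def gagliardoDensity (a : Eucl N → Eucl N → ℝ → ℝ) (p : Eucl N × Eucl N) (t : ℝ) : ℝ :=
  (dist p.1 p.2 ^ (N : ℝ))⁻¹ * phiF a p.1 p.2 t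

/-- The density `β(x) φ_{x,x}(t)` of the exterior modular `modB`; with `β = 1` it is the density of
`modO`. -/
def diagDensity (a : Eucl N → Eucl N → ℝ → ℝ) (β : Eucl N → ℝ) (x : Eucl N) (t : ℝ) : ℝ :=
  β x * phiF a x x t

theorem phiF_odd (a : Eucl N → Eucl N → ℝ → ℝ) (x y : Eucl N) : (phiF a x y).Odd := fun t => by
  by_cases h : t = 0 <;> simp [phiF, h]

theorem mul_abs_eq_phiF (a : Eucl N → Eucl N → ℝ → ℝ) (x y : Eucl N) (t : ℝ) :
    a x y |t| * t = phiF a x y t := by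
  by_cases h : t = 0 <;> simp [phiF, h]

theorem Ku_eq_phiF (a : Eucl N → Eucl N → ℝ → ℝ) (s : ℝ) (u : Eucl N → ℝ)
    (p : Eucl N × Eucl N) : Ku a s u p = phiF a p.1 p.2 (Du s u p) := by
  rw [Ku, mul_abs_eq_phiF]
  split_ifs with h
  · simp [Du, h, phiF]
  · rfl

theorem primitive_gagliardoDensity (a : Eucl N → Eucl N → ℝ → ℝ) (p : Eucl N × Eucl N) (t : ℝ) :
    primitive (gagliardoDensity a p) t = PhiF a p.1 p.2 t / dist p.1 p.2 ^ (N : ℝ) :=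
  (primitive_const_mul _ _ t).trans (div_eq_inv_mul _ _).symm

theorem primitive_diagDensity (a : Eucl N → Eucl N → ℝ → ℝ) (β : Eucl N → ℝ) (x : Eucl N)
    (t : ℝ) : primitive (diagDensity a β x) t = β x * PhiF a x x t :=
  primitive_const_mul _ _ t

theorem modQ_eq_modular (a : Eucl N → Eucl N → ℝ → ℝ) (s : ℝ) (Ω : Set (Eucl N))
    (u : Eucl N → ℝ) (l : ℝ) :
    modQ a s Ω u l =
      modular (volume.restrict (Qset Ω)) (gagliardoDensity a) fun p => Du s u p / l := by
  simp only [modQ, modular, primitive_gagliardoDensity]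
  refine lintegral_congr fun p => ?_
  have habs : |(|u p.1 - u p.2| / (l * dist p.1 p.2 ^ s))| = |Du s u p / l| := by
    rw [Du, div_div, abs_div, abs_div, abs_abs, mul_comm]
  have heven : ∀ t, PhiF a p.1 p.2 |t| = PhiF a p.1 p.2 t := primitive_abs (phiF_odd a p.1 p.2)
  rw [← heven, habs, heven]

theorem modB_eq_modular (a : Eucl N → Eucl N → ℝ → ℝ) (Ω : Set (Eucl N)) (β u : Eucl N → ℝ)
    (l : ℝ) :
    modB a Ω β u l = modular (volume.restrict Ωᶜ) (diagDensity a β) fun x => u x / l := by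
  simp only [modB, modular, primitive_diagDensity]
  refine lintegral_congr fun x => ?_
  have heven : ∀ t, PhiF a x x |t| = PhiF a x x t := primitive_abs (phiF_odd a x x)
  rw [← heven, abs_div, abs_abs, ← abs_div, heven]

theorem modO_eq_modular (a : Eucl N → Eucl N → ℝ → ℝ) (Ω : Set (Eucl N)) (u : Eucl N → ℝ)
    (l : ℝ) :
    modO a Ω u l = modular (volume.restrict Ω) (diagDensity a 1) fun x => u x / l := by
  have hB := modB_eq_modular a Ωᶜ 1 u l
  simpa only [modO, modB, Pi.one_apply, one_mul, compl_compl] using hB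

theorem measurable_Du (hu : Measurable u) : Measurable (Du s u) :=
  ((hu.comp measurable_fst).sub (hu.comp measurable_snd)).div (measurable_dist.pow_const s)

theorem abs_Du_abs_add_abs_le (s : ℝ) (u v : Eucl N → ℝ) (p : Eucl N × Eucl N) :
    |Du s (fun x => |u x| + |v x|) p| ≤ |Du s u p| + |Du s v p| := by
  simp only [Du, abs_div, ← add_div]
  gcongr
  calc |(|u p.1| + |v p.1|) - (|u p.2| + |v p.2|)|
      = |(|u p.1| - |u p.2|) + (|v p.1| - |v p.2|)| := by ring_nf
    _ ≤ |(|u p.1| - |u p.2|)| + |(|v p.1| - |v p.2|)| := abs_add_le _ _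
    _ ≤ |u p.1 - u p.2| + |v p.1 - v p.2| :=
      add_le_add (abs_abs_sub_abs_le _ _) (abs_abs_sub_abs_le _ _)

theorem measurable_phiF (ha : Measurable fun p : Eucl N × Eucl N × ℝ => a p.1 p.2.1 p.2.2)
    {α : Type*} [MeasurableSpace α] {X Y : α → Eucl N} {T : α → ℝ}
    (hX : Measurable X) (hY : Measurable Y) (hT : Measurable T) :
    Measurable fun p => phiF a (X p) (Y p) (T p) := by
  simp only [← mul_abs_eq_phiF]
  exact (ha.comp (hX.prodMk (hY.prodMk hT.abs))).mul hT

theorem measurable_gagliardoDensity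
    (ha : Measurable fun p : Eucl N × Eucl N × ℝ => a p.1 p.2.1 p.2.2) :
    Measurable (Function.uncurry (gagliardoDensity a)) :=
  ((measurable_dist.pow_const (N : ℝ)).inv.comp measurable_fst).mul
    (measurable_phiF ha (measurable_fst.comp measurable_fst) (measurable_snd.comp measurable_fst)
      measurable_snd)

theorem measurable_diagDensity
    (ha : Measurable fun p : Eucl N × Eucl N × ℝ => a p.1 p.2.1 p.2.2) (hβ : Measurable β) :
    Measurable (Function.uncurry (diagDensity a β)) :=
  (hβ.comp measurable_fst).mul (measurable_phiF ha measurable_fst measurable_fst measurable_snd)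

theorem isYoungDensity_gagliardoDensity (hφ : ∀ x y, IsYoungDensity K (phiF a x y))
    (p : Eucl N × Eucl N) : IsYoungDensity K (gagliardoDensity a p) :=
  (hφ p.1 p.2).const_mul (inv_nonneg.2 (Real.rpow_nonneg dist_nonneg _))

theorem isYoungDensity_diagDensity (hφ : ∀ x y, IsYoungDensity K (phiF a x y)) {x : Eucl N}
    (hx : 0 ≤ β x) : IsYoungDensity K (diagDensity a β x) :=
  (hφ x x).const_mul hx

theorem mem_XsetX_iff (hφ : ∀ x y, IsYoungDensity K (phiF a x y))
    (hβ0 : ∀ᵐ x ∂(volume.restrict Ωᶜ), 0 ≤ β x) :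
    u ∈ XsetX a s Ω β ↔ Measurable u ∧
      modular (volume.restrict (Qset Ω)) (gagliardoDensity a) (Du s u) < ⊤ ∧
      modular (volume.restrict Ω) (diagDensity a 1) u < ⊤ ∧
      modular (volume.restrict Ωᶜ) (diagDensity a β) u < ⊤ := by
  have hQ := lux_modular_lt_top_iff (μ := volume.restrict (Qset Ω)) (U := Du s u)
    (.of_forall (isYoungDensity_gagliardoDensity hφ))
  have hO := lux_modular_lt_top_iff (μ := volume.restrict Ω) (U := u)
    (.of_forall fun x => isYoungDensity_diagDensity (β := 1) hφ (x := x) zero_le_one)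
  have hB := lux_modular_lt_top_iff (U := u) (hβ0.mono fun _ => isYoungDensity_diagDensity hφ)
  simp only [← modQ_eq_modular, ← modO_eq_modular, ← modB_eq_modular] at hQ hO hB
  simp only [XsetX, normX, mem_ofPred_eq, ENNReal.add_lt_top, and_assoc, hQ, hO, hB]

theorem abs_add_abs_mem_XsetX
    (ha : Measurable fun p : Eucl N × Eucl N × ℝ => a p.1 p.2.1 p.2.2)
    (hφ : ∀ x y, IsYoungDensity K (phiF a x y)) (hβ : Measurable β)
    (hβ0 : ∀ᵐ x ∂(volume.restrict Ωᶜ), 0 ≤ β x)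
    (hu : u ∈ XsetX a s Ω β) (hv : v ∈ XsetX a s Ω β) :
    (fun x => |u x| + |v x|) ∈ XsetX a s Ω β := by
  rw [mem_XsetX_iff hφ hβ0] at hu hv ⊢
  obtain ⟨hum, huQ, huO, huB⟩ := hu
  obtain ⟨hvm, hvQ, hvO, hvB⟩ := hv
  have hφQ := isYoungDensity_gagliardoDensity hφ
  refine ⟨hum.abs.add hvm.abs, ?_, ?_, ?_⟩
  · refine (modular_mono (.of_forall hφQ) fun p => ?_).trans_lt <| modular_abs_add_abs_lt_top
      (.of_forall hφQ) (measurable_gagliardoDensity ha) (measurable_Du hum) huQ hvQ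
    exact (abs_Du_abs_add_abs_le s u v p).trans (le_abs_self _)
  · exact modular_abs_add_abs_lt_top (.of_forall fun _ => isYoungDensity_diagDensity hφ zero_le_one)
      (measurable_diagDensity ha measurable_one) hum huO hvO
  · exact modular_abs_add_abs_lt_top (hβ0.mono fun _ => isYoungDensity_diagDensity hφ)
      (measurable_diagDensity ha hβ) hum huB hvB

end Space

section Energy

variable {a : Eucl N → Eucl N → ℝ → ℝ} {s : ℝ} {Ω : Set (Eucl N)} {β : Eucl N → ℝ} {K : ℝ}
  {u v : Eucl N → ℝ}

theorem hasDerivAt_modQ (ha : Measurable fun p : Eucl N × Eucl N × ℝ => a p.1 p.2.1 p.2.2)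
    (hφ : ∀ x y, IsYoungDensity K (phiF a x y)) (hum : Measurable u) (hvm : Measurable v)
    (hu : modular (volume.restrict (Qset Ω)) (gagliardoDensity a) (Du s u) < ⊤)
    (hv : modular (volume.restrict (Qset Ω)) (gagliardoDensity a) (Du s v) < ⊤) :
    HasDerivAt (fun t : ℝ => (modQ a s Ω (fun x => u x + t * v x) 1).toReal)
      (∫ p in Qset Ω, Ku a s u p * Du s v p / dist p.1 p.2 ^ (N : ℝ)) 0 := by
  have hDu : ∀ t p, Du s (fun x => u x + t * v x) p = Du s u p + t * Du s v p := fun t p => by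
    simp only [Du]
    ring
  have hK : ∀ p, Ku a s u p * Du s v p / dist p.1 p.2 ^ (N : ℝ) =
      gagliardoDensity a p (Du s u p) * Du s v p := fun p => by
    rw [Ku_eq_phiF, gagliardoDensity]
    ring
  simp only [modQ_eq_modular, div_one, hDu, hK]
  exact hasDerivAt_modular_add_mul (.of_forall (isYoungDensity_gagliardoDensity hφ))
    (measurable_gagliardoDensity ha) (measurable_Du hum) (measurable_Du hvm) hu hv

theorem hasDerivAt_modB (ha : Measurable fun p : Eucl N × Eucl N × ℝ => a p.1 p.2.1 p.2.2)
    (hφ : ∀ x y, IsYoungDensity K (phiF a x y)) (hβ : Measurable β)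
    (hβ0 : ∀ᵐ x ∂(volume.restrict Ωᶜ), 0 ≤ β x) (hum : Measurable u) (hvm : Measurable v)
    (hu : modular (volume.restrict Ωᶜ) (diagDensity a β) u < ⊤)
    (hv : modular (volume.restrict Ωᶜ) (diagDensity a β) v < ⊤) :
    HasDerivAt (fun t : ℝ => (modB a Ω β (fun x => u x + t * v x) 1).toReal)
      (∫ x in Ωᶜ, β x * (a x x |u x| * u x * v x)) 0 := by
  simp only [modB_eq_modular, div_one, mul_abs_eq_phiF, ← mul_assoc]
  exact hasDerivAt_modular_add_mul (hβ0.mono fun _ => isYoungDensity_diagDensity hφ)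
    (measurable_diagDensity ha hβ) hum hvm hu hv

theorem hasDerivAt_modO (ha : Measurable fun p : Eucl N × Eucl N × ℝ => a p.1 p.2.1 p.2.2)
    (hφ : ∀ x y, IsYoungDensity K (phiF a x y)) (hum : Measurable u) (hvm : Measurable v)
    (hu : modular (volume.restrict Ω) (diagDensity a 1) u < ⊤)
    (hv : modular (volume.restrict Ω) (diagDensity a 1) v < ⊤) :
    HasDerivAt (fun t : ℝ => (modO a Ω (fun x => u x + t * v x) 1).toReal)
      (∫ x in Ω, a x x |u x| * u x * v x) 0 := by
  have hderiv := hasDerivAt_modular_add_mul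
    (.of_forall fun _ => isYoungDensity_diagDensity hφ zero_le_one)
    (measurable_diagDensity ha measurable_one) hum hvm hu hv
  simpa only [modO_eq_modular, div_one, mul_abs_eq_phiF, diagDensity, Pi.one_apply, one_mul]
    using hderiv

theorem abs_mul_le_mul_rpow {h : ℝ → ℝ} {c q τ M : ℝ} (hq : 1 ≤ q)
    (hh : ∀ t, |h t| ≤ c * |t| ^ (q - 1)) (hτ : |τ| ≤ M) : |h τ| * M ≤ c * M ^ q := by
  have hM : 0 ≤ M := (abs_nonneg τ).trans hτ
  have hc : 0 ≤ c := by simpa using (abs_nonneg (h 1)).trans (hh 1)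
  calc |h τ| * M ≤ c * M ^ (q - 1) * M := by
        gcongr
        exact (hh τ).trans (by gcongr)
    _ = c * M ^ q := by
        rw [mul_assoc, ← Real.rpow_add_one' hM (by linarith), sub_add_cancel]

theorem hasDerivAt_integral_Ff (hΩ : MeasurableSet Ω) {q : Eucl N → ℝ}
    (hqm : AEMeasurable q (volume.restrict Ω)) (hq : ∀ x ∈ Ω, 1 ≤ q x) {f : Eucl N → ℝ → ℝ}
    (hfmeas : ∀ t, Measurable fun x => f x t) (hfcont : ∀ x, Continuous (f x)) {c : ℝ}
    (hf : ∀ x ∈ Ω, ∀ t, |f x t| ≤ c * |t| ^ (q x - 1)) (hu : Measurable u) (hv : Measurable v)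
    (hint : ∫⁻ x in Ω, ENNReal.ofReal ((|u x| + |v x|) ^ q x) < ⊤) :
    HasDerivAt (fun t : ℝ => ∫ x in Ω, Ff f x (u x + t * v x)) (∫ x in Ω, f x (u x) * v x) 0 := by
  have hfm : Measurable (Function.uncurry f) :=
    (measurable_uncurry_of_continuous_of_measurable (u := fun t x => f x t) hfcont hfmeas).comp
      measurable_swap
  have hnonneg : ∀ x, 0 ≤ (|u x| + |v x|) ^ q x := fun x => by positivity
  have hbound : Integrable (fun x => c * (|u x| + |v x|) ^ q x) (volume.restrict Ω) :=
    Integrable.const_mul ⟨((hu.abs.add hv.abs).aemeasurable.pow hqm).aestronglyMeasurable,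
      (hasFiniteIntegral_iff_ofReal (.of_forall hnonneg)).2 hint⟩ c
  refine hasDerivAt_integral_primitive_add_mul hfm (.of_forall hfcont) hu hv hbound ?_
  filter_upwards [ae_restrict_mem hΩ] with x hx τ hτ
  exact abs_mul_le_mul_rpow (hq x hx) (hf x hx) hτ

end Energy

theorem statement9_general {Ω : Set (Eucl N)} (hΩ : MeasurableSet Ω) (s : ℝ)
    {a : Eucl N → Eucl N → ℝ → ℝ}
    (ha : Measurable fun p : Eucl N × Eucl N × ℝ => a p.1 p.2.1 p.2.2)
    {K : ℝ} (hφ : ∀ x y, IsYoungDensity K (phiF a x y))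
    {β : Eucl N → ℝ} (hβ : Measurable β) (hβ0 : ∀ᵐ x ∂(volume.restrict Ωᶜ), 0 ≤ β x)
    {q : Eucl N → ℝ} (hqm : AEMeasurable q (volume.restrict Ω)) (hq : ∀ x ∈ Ω, 1 ≤ q x)
    {f : Eucl N → ℝ → ℝ} (hfmeas : ∀ t, Measurable fun x => f x t)
    (hfcont : ∀ x, Continuous (f x)) {c : ℝ}
    (hf : ∀ x ∈ Ω, ∀ t, |f x t| ≤ c * |t| ^ (q x - 1))
    (hqint : ∀ u ∈ XsetX a s Ω β, ∫⁻ x in Ω, ENNReal.ofReal (|u x| ^ q x) < ⊤)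
    (lam : ℝ) {u v : Eucl N → ℝ} (hu : u ∈ XsetX a s Ω β) (hv : v ∈ XsetX a s Ω β) :
    HasDerivAt (fun t : ℝ => Jlam a s Ω β f lam fun x => u x + t * v x)
      (Aform a s Ω β u v - lam * ∫ x in Ω, f x (u x) * v x) 0 := by
  have hsum : ∫⁻ x in Ω, ENNReal.ofReal ((|u x| + |v x|) ^ q x) < ⊤ := by
    have habs : ∀ x, |(|u x| + |v x|)| = |u x| + |v x| := fun x => abs_of_nonneg (by positivity)
    simpa only [habs] using hqint _ (abs_add_abs_mem_XsetX ha hφ hβ hβ0 hu hv)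
  rw [mem_XsetX_iff hφ hβ0] at hu hv
  obtain ⟨hum, huQ, huO, huB⟩ := hu
  obtain ⟨hvm, hvQ, hvO, hvB⟩ := hv
  exact ((((hasDerivAt_modQ ha hφ hum hvm huQ hvQ).const_mul (1 / 2)).add
    (hasDerivAt_modO ha hφ hum hvm huO hvO)).add
    (hasDerivAt_modB ha hφ hβ hβ0 hum hvm huB hvB)).sub
    ((hasDerivAt_integral_Ff hΩ hqm hq hfmeas hfcont hf hum hvm hsum).const_mul lam)

/-- Gâteaux differentiability of the energy functional `J_λ`. -/
theorem statement9
    (N : ℕ) (hN : 1 ≤ N)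
    (Ω : Set (Eucl N)) (hΩo : IsOpen Ω) (hΩb : Bornology.IsBounded Ω) (hΩne : Ω.Nonempty)
    (s : ℝ) (hs : s ∈ Set.Ioo (0:ℝ) 1)
    (a : Eucl N → Eucl N → ℝ → ℝ)
    (ha : Measurable fun p : Eucl N × Eucl N × ℝ => a p.1 p.2.1 p.2.2)
    (hmono : ∀ x y, StrictMono (phiF a x y))
    (hcont : ∀ x y, Continuous (phiF a x y))
    (hsurj : ∀ x y, Function.Surjective (phiF a x y))
    (β : Eucl N → ℝ) (hβm : Measurable β)
    (hβb : ∃ C : ℝ, ∀ᵐ x ∂(volume.restrict Ωᶜ), |β x| ≤ C)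
    (hβ0 : ∀ᵐ x ∂(volume.restrict Ωᶜ), 0 ≤ β x)
    (φm φp : ℝ) (hφm : 1 < φm) (hφmp : φm ≤ φp)
    (hΦ1 : ∀ x y t, 0 < t →
      φm ≤ t * phiF a x y t / PhiF a x y t ∧ t * phiF a x y t / PhiF a x y t ≤ φp)
    (hsym : ∀ x y t, a x y t = a y x t)
    (q : Eucl N → ℝ) (hqc : ContinuousOn q (closure Ω)) (hq1 : ∀ x ∈ closure Ω, 1 < q x)
    (f : Eucl N → ℝ → ℝ)
    (hfmeas : ∀ t : ℝ, Measurable fun x => f x t)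
    (hfcont : ∀ x : Eucl N, Continuous fun t => f x t)
    (c₁ : ℝ) (hc₁ : 0 < c₁)
    (hf : ∀ x ∈ Ω, ∀ t : ℝ, |f x t| ≤ c₁ * |t| ^ (q x - 1))
    (hqint : ∀ u ∈ XsetX a s Ω β, (∫⁻ x in Ω, ENNReal.ofReal (|u x| ^ q x)) < ⊤) :
    ∀ lam : ℝ, 0 < lam → ∀ u ∈ XsetX a s Ω β, ∀ v ∈ XsetX a s Ω β,
      Tendsto
        (fun t : ℝ =>
          (Jlam a s Ω β f lam (fun x => u x + t * v x) - Jlam a s Ω β f lam u) / t)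
        (nhdsWithin 0 {(0:ℝ)}ᶜ)
        (nhds (Aform a s Ω β u v - lam * ∫ x in Ω, f x (u x) * v x)) := by
  intro lam _ u hu v hv
  have hφ : ∀ x y, IsYoungDensity φp (phiF a x y) := fun x y =>
    .of_div_le (phiF_odd a x y) (hmono x y) (hcont x y) fun t ht => (hΦ1 x y t ht).2
  have hderiv := statement9_general hΩo.measurableSet s ha hφ hβm hβ0
    ((hqc.mono subset_closure).aemeasurable hΩo.measurableSet)
    (fun x hx => (hq1 x (subset_closure hx)).le) hfmeas hfcont hf hqint lam hu hv
  simpa only [zero_add, zero_mul, add_zero, smul_eq_mul, ← div_eq_inv_mul]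
    using hderiv.tendsto_slope_zero
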